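/- arXiv:1012.5492 — 13 statements merged into one kernel-verified Lean document; each statement's English description precedes it below -/
import Mathlib

section
/- Let x, y : Fin n → EReal. If each of x and y has at least one real entry (i.e., neither has all entries in {−∞, +∞}), then d(x, y) ≥ 0, and d(x, y) = 0 if and only if there exists λ ∈ ℝ such that x = y + λ (pointwise). Moreover, for arbitrary x, y : Fin n → EReal, d(x, y) = 0 implies that x = y + λ for some λ ∈ ℝ. -/
/-!
The set defining `x\y` contains its own supremum: the map `l ↦ u + l` on `EReal` is residuated
because `⊤ + ⊥ = ⊥` (`add_sSup_le`). Hence `x + x\y ≤ y` and `y + y\x ≤ x` (`add_vres_le`).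
Composing these gives `x + (x\y + y\x) ≤ x`, so at a real entry of `x` the sum `x\y + y\x` is
nonpositive. If the sum is zero, both residuals are real and opposite, and the two inequalities
together force `x = y + y\x`. Conversely, if `x = y + l` with `l` real, then `l ≤ y\x` and
`-l ≤ x\y`, so the sum is also nonnegative.
-/

/-- Vector residuation `x\y` over `EReal`. -/
noncomputable def vres {n : ℕ} (x y : Fin n → EReal) : EReal :=
  sSup {l : EReal | ∀ i, x i + l ≤ y i}

/-- Hilbert's projective distance `d(x,y) = -((x\y) + (y\x))`. -/
noncomputable def dH {n : ℕ} (x y : Fin n → EReal) : EReal := -(vres x y + vres y x)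

theorem add_sSup_le (u v : EReal) (S : Set EReal) (h : ∀ l ∈ S, u + l ≤ v) :
    u + sSup S ≤ v := by
  induction u with
  | bot => simp
  | top =>
    by_cases hv : v = ⊤
    · simp [hv]
    · have hS : sSup S = ⊥ := by
        rw [sSup_eq_bot]
        intro l hl
        by_contra hne
        have h1 := h l hl
        rw [EReal.top_add_of_ne_bot hne, top_le_iff] at h1
        exact hv h1
      simp [hS]
  | coe r =>
    have key (l : EReal) : (r : EReal) + l ≤ v ↔ l ≤ v - r := by
      rw [add_comm, EReal.le_sub_iff_add_le (by simp) (by simp)]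
    rw [key]
    exact sSup_le fun l hl => (key l).1 (h l hl)

theorem add_vres_le {n : ℕ} (x y : Fin n → EReal) (i : Fin n) : x i + vres x y ≤ y i :=
  add_sSup_le _ _ _ fun _ hl => hl i

theorem vres_add_vres_le_zero {n : ℕ} (x y : Fin n → EReal)
    (hx : ∃ i, ∃ r : ℝ, x i = (r : EReal)) : vres x y + vres y x ≤ 0 := by
  obtain ⟨i, r, hr⟩ := hx
  have h : x i + (vres x y + vres y x) ≤ x i := by
    rw [← add_assoc]
    exact (add_le_add_left (add_vres_le x y i) _).trans (add_vres_le y x i)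
  rw [hr] at h
  generalize vres x y + vres y x = s at h ⊢
  induction s with
  | bot => simp
  | top => simp at h
  | coe s =>
    norm_cast at h ⊢
    linarith

theorem exists_of_dH_eq_zero {n : ℕ} (x y : Fin n → EReal) (h : dH x y = 0) :
    ∃ l : ℝ, x = fun i => y i + (l : EReal) := by
  have hab : vres x y + vres y x = 0 := by simpa [dH] using h
  have h1 := add_vres_le x y
  have h2 := add_vres_le y x
  generalize vres x y = a at hab h1
  generalize vres y x = b at hab h2
  induction a with
  | bot => simp at hab
  | top => induction b <;> simp at hab
  | coe a =>
    induction b with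
    | bot => simp at hab
    | top => simp at hab
    | coe b =>
      norm_cast at hab
      refine ⟨b, funext fun i => le_antisymm ?_ (h2 i)⟩
      calc x i = x i + (a : EReal) + (b : EReal) := by
            rw [add_assoc, ← EReal.coe_add, hab, EReal.coe_zero, add_zero]
        _ ≤ y i + (b : EReal) := add_le_add_left (h1 i) _

theorem dH_nonneg_and_eq_zero_iff (n : ℕ) :
    (∀ x y : Fin n → EReal,
      (∃ i, ∃ r : ℝ, x i = (r : EReal)) → (∃ i, ∃ r : ℝ, y i = (r : EReal)) →
      0 ≤ dH x y ∧ (dH x y = 0 ↔ ∃ l : ℝ, x = fun i => y i + (l : EReal))) ∧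
    (∀ x y : Fin n → EReal,
      dH x y = 0 → ∃ l : ℝ, x = fun i => y i + (l : EReal)) := by
  refine ⟨fun x y hx _ => ?_, exists_of_dH_eq_zero⟩
  have hle := vres_add_vres_le_zero x y hx
  refine ⟨EReal.neg_le_neg_iff.1 (by simpa [dH] using hle), exists_of_dH_eq_zero x y, ?_⟩
  rintro ⟨l, hl⟩
  have h1 : (l : EReal) ≤ vres y x := le_sSup fun i => by rw [hl]
  have h2 : ((-l : ℝ) : EReal) ≤ vres x y := le_sSup fun i => by
    rw [hl, add_assoc, ← EReal.coe_add, add_neg_cancel, EReal.coe_zero, add_zero]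
  have hge : 0 ≤ vres x y + vres y x := by
    calc (0 : EReal) = ((-l : ℝ) : EReal) + (l : EReal) := by
          rw [← EReal.coe_add, neg_add_cancel, EReal.coe_zero]
      _ ≤ _ := add_le_add h2 h1
  simp [dH, le_antisymm hle hge]
end

section
/- For all x, y, z : Fin n → EReal one has d(x, z) ≤ d(x, y) +' d(y, z), where +' is the upper addition a +' b := −((−a) + (−b)). Moreover, if each of x, y, z has at least one real entry, then d(x, z) ≤ d(x, y) + d(y, z) holds with the ordinary EReal addition. -/
/-- Upper (dual) addition on `EReal`. -/
noncomputable def uadd (a b : EReal) : EReal := -((-a) + (-b))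

/-- Residuation is superadditive along chains. -/
lemma vres_add_le {n : ℕ} (x y z : Fin n → EReal) : vres x y + vres y z ≤ vres x z := by
  refine EReal.add_le_of_forall_lt fun a ha b hb => ?_
  obtain ⟨l, hl, hal⟩ := lt_sSup_iff.mp ha
  obtain ⟨m, hm, hbm⟩ := lt_sSup_iff.mp hb
  refine (add_le_add hal.le hbm.le).trans (le_sSup fun i => ?_)
  rw [← add_assoc]
  exact (add_le_add_left (hl i) m).trans (hm i)

lemma vres_self_le_zero {n : ℕ} {x : Fin n → EReal} (h : ∃ i, ∃ r : ℝ, x i = (r : EReal)) :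
    vres x x ≤ 0 := by
  obtain ⟨i, r, hr⟩ := h
  refine sSup_le fun l hl => ?_
  have h1 := hl i
  rw [hr] at h1
  refine EReal.addLECancellable_coe r ?_
  simpa using h1

lemma vres_add_vres_ne_top {n : ℕ} {y : Fin n → EReal} (h : ∃ i, ∃ r : ℝ, y i = (r : EReal))
    (z : Fin n → EReal) : vres y z + vres z y ≠ ⊤ :=
  (((vres_add_le y z y).trans (vres_self_le_zero h)).trans_lt EReal.zero_lt_top).ne

theorem dH_triangle (n : ℕ) (x y z : Fin n → EReal) :
    dH x z ≤ uadd (dH x y) (dH y z) ∧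
    ((∃ i, ∃ r : ℝ, x i = (r : EReal)) → (∃ i, ∃ r : ℝ, y i = (r : EReal)) →
      (∃ i, ∃ r : ℝ, z i = (r : EReal)) → dH x z ≤ dH x y + dH y z) := by
  have key : dH x z ≤ uadd (dH x y) (dH y z) := by
    unfold uadd dH
    rw [neg_neg, neg_neg, EReal.neg_le_neg_iff]
    calc vres x y + vres y x + (vres y z + vres z y)
        = (vres x y + vres y z) + (vres z y + vres y x) := by
          rw [add_add_add_comm, add_comm (vres y x)]
      _ ≤ _ := add_le_add (vres_add_le x y z) (vres_add_le z y x)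
  refine ⟨key, fun _ hy _ => key.trans_eq ?_⟩
  have h1 : vres x y + vres y x ≠ ⊤ := by
    rw [add_comm]
    exact vres_add_vres_ne_top hy x
  have h2 := vres_add_vres_ne_top hy z
  unfold uadd dH
  rw [neg_neg, neg_neg, EReal.neg_add (Or.inr h2) (Or.inl h1), sub_eq_add_neg]
end

section
/- For any x, y : Fin n → EReal the following three statements are equivalent: (1) x\y > −∞; (2) there exists λ ∈ ℝ such that x i + λ ≤ y i for all i; (3) Usupp x ⊆ Usupp y and Lsupp y ⊆ Lsupp x. -/
/-- Upper support: indices with entry `> -∞`. -/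
def Usupp {n : ℕ} (x : Fin n → EReal) : Set (Fin n) := {i | x i ≠ ⊥}

/-- Lower support: indices with entry `< +∞`. -/
def Lsupp {n : ℕ} (x : Fin n → EReal) : Set (Fin n) := {i | x i ≠ ⊤}

/-- Coordinatewise form of the support condition: under it, a single entry `a` can be translated
below `b` by a real number. -/
theorem exists_real_add_le {a b : EReal} (hbot : a ≠ ⊥ → b ≠ ⊥) (htop : b ≠ ⊤ → a ≠ ⊤) :
    ∃ l : ℝ, a + (l : EReal) ≤ b := by
  by_cases ha : a = ⊥
  · exact ⟨0, by simp [ha]⟩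
  by_cases hb : b = ⊤
  · exact ⟨0, by simp [hb]⟩
  lift a to ℝ using ⟨htop hb, ha⟩
  lift b to ℝ using ⟨hb, hbot ha⟩
  refine ⟨b - a, ?_⟩
  norm_cast
  linarith

theorem vres_gt_bot_iff (n : ℕ) (x y : Fin n → EReal) :
    (⊥ < vres x y ↔ ∃ l : ℝ, ∀ i, x i + (l : EReal) ≤ y i) ∧
    ((∃ l : ℝ, ∀ i, x i + (l : EReal) ≤ y i) ↔
      (Usupp x ⊆ Usupp y ∧ Lsupp y ⊆ Lsupp x)) := by
  refine ⟨⟨fun h => ?_, ?_⟩, ⟨?_, ?_⟩⟩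
  · obtain ⟨l, hl, hlt⟩ := lt_sSup_iff.mp h
    obtain ⟨r, -, hr⟩ := EReal.lt_iff_exists_real_btwn.mp hlt
    exact ⟨r, fun i => (add_le_add le_rfl hr.le).trans (hl i)⟩
  · rintro ⟨l, hl⟩
    exact (EReal.bot_lt_coe l).trans_le (le_sSup hl)
  · rintro ⟨l, hl⟩
    refine ⟨fun i hx hy => ?_, fun i hy hx => ?_⟩
    · have h := hl i
      rw [hy, le_bot_iff, EReal.add_eq_bot_iff] at h
      exact h.elim hx (EReal.coe_ne_bot l)
    · have h := hl i
      rw [hx, EReal.top_add_coe, top_le_iff] at h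
      exact hy h
  · rintro ⟨hU, hL⟩
    choose l hl using fun i => exists_real_add_le (@hU i) (@hL i)
    obtain ⟨m, hm⟩ := (Set.finite_range l).bddBelow
    refine ⟨m, fun i => (add_le_add le_rfl ?_).trans (hl i)⟩
    exact EReal.coe_le_coe_iff.mpr (hm ⟨i, rfl⟩)
end

section
/- For any x, y : Fin n → EReal the following four statements are equivalent: (1) d(x, y) < +∞; (2) x and y are in the same part, i.e., there exist λ, μ ∈ ℝ with x + λ ≤ y ≤ x + μ pointwise; (3) Usupp x = Usupp y and Lsupp x = Lsupp y; (4) Supp x = Supp y, {i | x i = −∞} = {i | y i = −∞}, and {i | x i = +∞} = {i | y i = +∞}. -/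
/-- Support: indices with real (finite) entry. -/
def Supp {n : ℕ} (x : Fin n → EReal) : Set (Fin n) := {i | ∃ r : ℝ, x i = (r : EReal)}

/-- `x` and `y` are in the same part. -/
def SamePart {n : ℕ} (x y : Fin n → EReal) : Prop :=
  ∃ l m : ℝ, (∀ i, x i + (l : EReal) ≤ y i) ∧ (∀ i, y i ≤ x i + (m : EReal))

/-- A supremum above `-∞` is witnessed by some `l > -∞` in the set, possibly `+∞`; any real below
`l` is then in the set as well. -/
theorem vres_ne_bot_iff {n : ℕ} (x y : Fin n → EReal) :
    vres x y ≠ ⊥ ↔ ∃ l : ℝ, ∀ i, x i + (l : EReal) ≤ y i := by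
  constructor
  · intro h
    obtain ⟨l, hl, hb⟩ := lt_sSup_iff.mp (bot_lt_iff_ne_bot.mpr h)
    obtain ⟨r, -, hr⟩ := EReal.lt_iff_exists_real_btwn.mp hb
    exact ⟨r, fun i => (add_le_add le_rfl hr.le).trans (hl i)⟩
  · rintro ⟨l, hl⟩ h
    have h1 : (l : EReal) ≤ vres x y := le_sSup hl
    rw [h, le_bot_iff] at h1
    exact EReal.coe_ne_bot l h1

/-- Finiteness of the index set enters here, to turn coordinatewise real bounds into a uniform
one. -/
theorem exists_real_add_le_iff {n : ℕ} (x y : Fin n → EReal) :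
    (∃ l : ℝ, ∀ i, x i + (l : EReal) ≤ y i) ↔
      ∀ i, (y i = ⊥ → x i = ⊥) ∧ (x i = ⊤ → y i = ⊤) := by
  constructor
  · rintro ⟨l, hl⟩ i
    have h := hl i
    constructor
    · intro hy
      rw [hy, le_bot_iff, EReal.add_eq_bot_iff] at h
      exact h.resolve_right (EReal.coe_ne_bot l)
    · intro hx
      rwa [hx, EReal.top_add_coe, top_le_iff] at h
  · intro h
    have hpt : ∀ i, ∃ l : ℝ, x i + (l : EReal) ≤ y i := by
      intro i
      obtain ⟨h1, h2⟩ := h i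
      generalize x i = a at h1 h2 ⊢
      generalize y i = b at h1 h2 ⊢
      induction a with
      | bot => exact ⟨0, by simp⟩
      | top => exact ⟨0, by simp [h2 rfl]⟩
      | coe a =>
        induction b with
        | bot => exact absurd (h1 rfl) (EReal.coe_ne_bot a)
        | top => exact ⟨0, le_top⟩
        | coe b => exact ⟨b - a, by rw [← EReal.coe_add]; simp⟩
    -- A common lower bound of the pointwise translations works at every index.
    choose f hf using hpt
    obtain ⟨l, hl⟩ := (Set.finite_range f).bddBelow
    exact ⟨l, fun i => (add_le_add le_rfl
      (EReal.coe_le_coe_iff.mpr (hl (Set.mem_range_self i)))).trans (hf i)⟩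

theorem samePart_iff {n : ℕ} (x y : Fin n → EReal) :
    SamePart x y ↔ (∃ l : ℝ, ∀ i, x i + (l : EReal) ≤ y i) ∧
      ∃ m : ℝ, ∀ i, y i + (m : EReal) ≤ x i := by
  have key : ∀ (a b : EReal) (m : ℝ), a ≤ b + (m : EReal) ↔ a + ((-m : ℝ) : EReal) ≤ b := by
    intro a b m
    rw [EReal.coe_neg, ← sub_eq_add_neg]
    exact (EReal.sub_le_iff_le_add (.inl (EReal.coe_ne_bot m)) (.inl (EReal.coe_ne_top m))).symm
  constructor
  · rintro ⟨l, m, hl, hm⟩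
    exact ⟨⟨l, hl⟩, -m, fun i => (key _ _ _).mp (hm i)⟩
  · rintro ⟨⟨l, hl⟩, m, hm⟩
    exact ⟨l, -m, hl, fun i => (key _ _ _).mpr (by rw [neg_neg]; exact hm i)⟩

theorem dH_lt_top_iff_vres {n : ℕ} (x y : Fin n → EReal) :
    dH x y < ⊤ ↔ vres x y ≠ ⊥ ∧ vres y x ≠ ⊥ := by
  rw [dH, lt_top_iff_ne_top, Ne, EReal.neg_eq_top_iff, EReal.add_eq_bot_iff, not_or]

theorem mem_Supp_iff {n : ℕ} (x : Fin n → EReal) (i : Fin n) :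
    i ∈ Supp x ↔ x i ≠ ⊥ ∧ x i ≠ ⊤ := by
  constructor
  · rintro ⟨r, hr⟩
    rw [hr]
    exact ⟨EReal.coe_ne_bot r, EReal.coe_ne_top r⟩
  · rintro ⟨hb, ht⟩
    exact ⟨(x i).toReal, (EReal.coe_toReal ht hb).symm⟩

theorem dH_lt_top_iff (n : ℕ) (x y : Fin n → EReal) :
    (dH x y < ⊤ ↔ SamePart x y) ∧
    (SamePart x y ↔ (Usupp x = Usupp y ∧ Lsupp x = Lsupp y)) ∧
    ((Usupp x = Usupp y ∧ Lsupp x = Lsupp y) ↔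
      (Supp x = Supp y ∧ {i | x i = ⊥} = {i | y i = ⊥} ∧ {i | x i = ⊤} = {i | y i = ⊤})) := by
  refine ⟨?_, ?_, ?_⟩
  · rw [dH_lt_top_iff_vres, samePart_iff, vres_ne_bot_iff, vres_ne_bot_iff]
  · rw [samePart_iff, exists_real_add_le_iff, exists_real_add_le_iff]
    simp only [Set.ext_iff, Usupp, Lsupp, Set.mem_ofPred_eq, Ne, not_iff_not]
    grind
  · simp only [Set.ext_iff, mem_Supp_iff, Usupp, Lsupp, Set.mem_ofPred_eq, Ne, not_iff_not]
    grind
end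

section
/- Let V ⊆ (Fin n → EReal) and x : Fin n → EReal. Then d(x, V) < +∞ if and only if V intersects the part [[x]] of x. In that case, for every v ∈ V with v ∉ [[x]] one has d(x, V) < d(x, v) = +∞ (so every best approximation of x in V lies in [[x]]), and d(x, V) = d(x, V ∩ [[x]]). -/
/-- Distance from a point to a set. -/
noncomputable def dSet {n : ℕ} (x : Fin n → EReal) (V : Set (Fin n → EReal)) : EReal :=
  ⨅ v ∈ V, dH x v

/-- The part `[[x]]` of `x`. -/
def part {n : ℕ} (x : Fin n → EReal) : Set (Fin n → EReal) :=
  {y | ∃ l m : ℝ, (∀ i, x i + (l : EReal) ≤ y i) ∧ (∀ i, y i ≤ x i + (m : EReal))}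

/-- A real summand can be moved across an inequality in `EReal`, infinite entries included. -/
theorem add_coe_le_iff_le_add_neg (a b : EReal) (l : ℝ) :
    a + (l : EReal) ≤ b ↔ a ≤ b + ((-l : ℝ) : EReal) := by
  rw [EReal.coe_neg, ← sub_eq_add_neg]
  exact (EReal.le_sub_iff_add_le (Or.inl (EReal.coe_ne_bot l)) (Or.inl (EReal.coe_ne_top l))).symm

theorem dH_lt_top_iff_s7 {n : ℕ} (x v : Fin n → EReal) : dH x v < ⊤ ↔ v ∈ part x := by
  rw [lt_top_iff_ne_top, dH, Ne, EReal.neg_eq_top_iff, EReal.add_eq_bot_iff, not_or]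
  change vres x v ≠ ⊥ ∧ vres v x ≠ ⊥ ↔ _
  rw [vres_ne_bot_iff, vres_ne_bot_iff]
  constructor
  · rintro ⟨⟨l, hl⟩, m, hm⟩
    exact ⟨l, -m, hl, fun i => (add_coe_le_iff_le_add_neg _ _ _).1 (hm i)⟩
  · rintro ⟨l, m, hl, hm⟩
    refine ⟨⟨l, hl⟩, -m, fun i => (add_coe_le_iff_le_add_neg _ _ _).2 ?_⟩
    rw [neg_neg]
    exact hm i

theorem dSet_lt_top_iff {n : ℕ} (V : Set (Fin n → EReal)) (x : Fin n → EReal) :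
    dSet x V < ⊤ ↔ (V ∩ part x).Nonempty := by
  simp only [dSet, iInf_lt_iff, dH_lt_top_iff_s7, exists_prop]
  rfl

theorem dist_lt_top_iff_meets_part (n : ℕ) (V : Set (Fin n → EReal)) (x : Fin n → EReal) :
    (dSet x V < ⊤ ↔ (V ∩ part x).Nonempty) ∧
    ((V ∩ part x).Nonempty →
      (∀ v ∈ V, v ∉ part x → dSet x V < dH x v ∧ dH x v = ⊤) ∧
      dSet x V = dSet x (V ∩ part x)) := by
  have htop : ∀ v, v ∉ part x → dH x v = ⊤ := fun v hv =>
    not_lt_top_iff.1 fun h => hv ((dH_lt_top_iff_s7 x v).1 h)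
  refine ⟨dSet_lt_top_iff V x, fun hne => ⟨fun v _ hv => ⟨?_, htop v hv⟩, le_antisymm ?_ ?_⟩⟩
  · rw [htop v hv]
    exact (dSet_lt_top_iff V x).2 hne
  · exact biInf_mono fun v hv => hv.1
  · refine le_iInf₂ fun v hv => ?_
    by_cases hp : v ∈ part x
    · exact iInf₂_le v ⟨hv, hp⟩
    · rw [htop v hp]
      exact le_top
end

section
/- Let x, y : Fin n → EReal have no entries equal to +∞, suppose neither is the all-(−∞) vector, and suppose they have the same support I := Supp x = Supp y (so x i and y i are real for i ∈ I). Then d(x, y) equals the extended real coercion of max_{i ∈ I} (x i − y i) − min_{j ∈ I} (x j − y j), where the maxima and minima are taken over the real values x i, y i for i ∈ I. -/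
/-- A real lower bound `c` of `y i - x i` over the common support `I` that is attained at some index
is the residuation `x\y`. -/
theorem vres_eq_coe {n : ℕ} {x y : Fin n → EReal} {I : Finset (Fin n)} {c : ℝ}
    (hx : ∀ i, x i ≠ ⊤)
    (hIx : ∀ i, i ∈ I ↔ ∃ r : ℝ, x i = (r : EReal))
    (hIy : ∀ i, i ∈ I ↔ ∃ r : ℝ, y i = (r : EReal))
    (hle : ∀ i ∈ I, c ≤ (y i).toReal - (x i).toReal)
    (hatt : ∃ i ∈ I, c = (y i).toReal - (x i).toReal) :
    vres x y = (c : EReal) := by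
  refine IsGreatest.csSup_eq ⟨fun i => ?_, fun l hl => ?_⟩
  · by_cases hi : i ∈ I
    · obtain ⟨a, ha⟩ := (hIx i).1 hi
      obtain ⟨b, hb⟩ := (hIy i).1 hi
      have h := hle i hi
      rw [ha, hb, EReal.toReal_coe, EReal.toReal_coe] at h
      rw [ha, hb]
      exact_mod_cast (by linarith : a + c ≤ b)
    · have hbot : x i = ⊥ := by
        by_contra hb
        exact hi ((hIx i).2 ⟨_, (EReal.coe_toReal (hx i) hb).symm⟩)
      simp [hbot]
  · obtain ⟨i, hi, hc⟩ := hatt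
    obtain ⟨a, ha⟩ := (hIx i).1 hi
    obtain ⟨b, hb⟩ := (hIy i).1 hi
    have h := hl i
    rw [ha, hb] at h
    rw [ha, hb, EReal.toReal_coe, EReal.toReal_coe] at hc
    induction l with
    | bot => exact bot_le
    | top => simp at h
    | coe r =>
      have h' : a + r ≤ b := by exact_mod_cast h
      exact_mod_cast (by linarith : r ≤ c)

theorem dH_formula_same_support (n : ℕ) (x y : Fin n → EReal)
    (hx : ∀ i, x i ≠ ⊤) (hy : ∀ i, y i ≠ ⊤)
    (hxb : x ≠ fun _ => (⊥ : EReal)) (hyb : y ≠ fun _ => (⊥ : EReal))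
    (I : Finset (Fin n)) (hIne : I.Nonempty)
    (hIx : ∀ i, i ∈ I ↔ ∃ r : ℝ, x i = (r : EReal))
    (hIy : ∀ i, i ∈ I ↔ ∃ r : ℝ, y i = (r : EReal)) :
    dH x y = (((I.sup' hIne fun i => (x i).toReal - (y i).toReal) -
      (I.inf' hIne fun j => (x j).toReal - (y j).toReal) : ℝ) : EReal) := by
  have hxy : vres x y =
      ((-(I.sup' hIne fun i => (x i).toReal - (y i).toReal) : ℝ) : EReal) := by
    refine vres_eq_coe hx hIx hIy (fun i hi => ?_) ?_
    · have := Finset.le_sup' (fun i => (x i).toReal - (y i).toReal) hi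
      linarith
    · obtain ⟨i, hi, h⟩ := Finset.exists_mem_eq_sup' hIne fun i => (x i).toReal - (y i).toReal
      exact ⟨i, hi, by rw [h]; ring⟩
  have hyx : vres y x =
      ((I.inf' hIne fun i => (x i).toReal - (y i).toReal : ℝ) : EReal) :=
    vres_eq_coe hy hIy hIx
      (fun _ hi => Finset.inf'_le (fun i => (x i).toReal - (y i).toReal) hi)
      (Finset.exists_mem_eq_inf' hIne fun i => (x i).toReal - (y i).toReal)
  rw [dH, hxy, hyx, ← EReal.coe_add, ← EReal.coe_neg]
  congr 1
  ring
end

section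
/- Let V ⊆ (Fin n → EReal) be a subsemimodule all of whose elements have no +∞ entry, and let x : Fin n → EReal have no +∞ entry. Set V^(x) := (V ∩ [[x]]) ∪ {⊥}, where ⊥ is the all-(−∞) vector. Then: (i) V^(x) is a subsemimodule, and it is contained in every subsemimodule containing V ∩ [[x]]; (ii) if V is b-complete, then V^(x) is b-complete; (iii) d(x, V) = d(x, V^(x)). -/
/-- A subsemimodule of the space of vectors with no `+∞` entry: contains the
all-`-∞` vector, is closed under binary pointwise maxima, and under addition of
scalars `≠ +∞`. -/
def IsSubsemimodule {n : ℕ} (V : Set (Fin n → EReal)) : Prop :=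
  (fun _ => (⊥ : EReal)) ∈ V ∧
  (∀ u ∈ V, ∀ v ∈ V, u ⊔ v ∈ V) ∧
  (∀ v ∈ V, ∀ l : EReal, l ≠ ⊤ → (fun i => v i + l) ∈ V)

/-- A b-complete subsemimodule: additionally closed under suprema of subsets
bounded above by an element of `V`. -/
def IsBComplete {n : ℕ} (V : Set (Fin n → EReal)) : Prop :=
  IsSubsemimodule V ∧ ∀ S ⊆ V, (∃ v ∈ V, ∀ s ∈ S, s ≤ v) → sSup S ∈ V

theorem exists_real_of_vres_ne_bot {n : ℕ} {x y : Fin n → EReal} (h : vres x y ≠ ⊥) :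
    ∃ r : ℝ, ∀ i, x i + (r : EReal) ≤ y i := by
  obtain ⟨l, hl, hbl⟩ := lt_sSup_iff.1 (bot_lt_iff_ne_bot.2 h)
  obtain ⟨r, -, hr⟩ := EReal.lt_iff_exists_real_btwn.1 hbl
  exact ⟨r, fun i => (add_le_add le_rfl hr.le).trans (hl i)⟩

theorem add_coe_add_neg (a : EReal) (r : ℝ) : a + (r : EReal) + ((-r : ℝ) : EReal) = a := by
  rw [add_assoc, ← EReal.coe_add, add_neg_cancel, EReal.coe_zero, add_zero]

theorem mem_part_of_vres_ne_bot {n : ℕ} {x y : Fin n → EReal} (h : vres x y ≠ ⊥)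
    (h' : vres y x ≠ ⊥) : y ∈ part x := by
  obtain ⟨l, hl⟩ := exists_real_of_vres_ne_bot h
  obtain ⟨m, hm⟩ := exists_real_of_vres_ne_bot h'
  refine ⟨l, -m, hl, fun i => ?_⟩
  rw [← add_coe_add_neg (y i) m]
  exact add_le_add (hm i) le_rfl

theorem dH_eq_top_of_notMem_part {n : ℕ} {x y : Fin n → EReal} (h : y ∉ part x) :
    dH x y = ⊤ := by
  unfold dH
  by_cases h1 : vres x y = ⊥
  · simp [h1]
  · by_cases h2 : vres y x = ⊥
    · simp [h2]
    · exact absurd (mem_part_of_vres_ne_bot h1 h2) h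

theorem sup_mem_part {n : ℕ} {x u v : Fin n → EReal} (hu : u ∈ part x) (hv : v ∈ part x) :
    u ⊔ v ∈ part x := by
  obtain ⟨l, m, hl, hm⟩ := hu
  obtain ⟨l', m', hl', hm'⟩ := hv
  refine ⟨l, max m m', fun i => (hl i).trans le_sup_left, fun i => sup_le ?_ ?_⟩
  · exact (hm i).trans (add_le_add le_rfl (EReal.coe_le_coe_iff.2 (le_max_left _ _)))
  · exact (hm' i).trans (add_le_add le_rfl (EReal.coe_le_coe_iff.2 (le_max_right _ _)))

theorem add_coe_mem_part {n : ℕ} {x v : Fin n → EReal} (hv : v ∈ part x) (r : ℝ) :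
    (fun i => v i + (r : EReal)) ∈ part x := by
  obtain ⟨l, m, hl, hm⟩ := hv
  refine ⟨l + r, m + r, fun i => ?_, fun i => ?_⟩
  · rw [EReal.coe_add, ← add_assoc]
    exact add_le_add (hl i) le_rfl
  · rw [EReal.coe_add, ← add_assoc]
    exact add_le_add (hm i) le_rfl

/-- A part is order-convex. -/
theorem mem_part_of_le_of_le {n : ℕ} {x u v w : Fin n → EReal} (hu : u ∈ part x)
    (hw : w ∈ part x) (huv : u ≤ v) (hvw : v ≤ w) : v ∈ part x := by
  obtain ⟨l, -, hl, -⟩ := hu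
  obtain ⟨-, m, -, hm⟩ := hw
  exact ⟨l, m, fun i => (hl i).trans (huv i), fun i => (hvw i).trans (hm i)⟩

theorem isSubsemimodule_inter_part {n : ℕ} {V : Set (Fin n → EReal)}
    (hV : IsSubsemimodule V) (x : Fin n → EReal) :
    IsSubsemimodule ((V ∩ part x) ∪ {fun _ => (⊥ : EReal)}) := by
  obtain ⟨-, hsup, hadd⟩ := hV
  have hbot : (fun _ => (⊥ : EReal)) = (⊥ : Fin n → EReal) := rfl
  refine ⟨Or.inr rfl, ?_, ?_⟩
  · rintro u (⟨hu, hux⟩ | rfl) v (⟨hv, hvx⟩ | rfl)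
    · exact Or.inl ⟨hsup u hu v hv, sup_mem_part hux hvx⟩
    · rw [hbot, sup_bot_eq]
      exact Or.inl ⟨hu, hux⟩
    · rw [hbot, bot_sup_eq]
      exact Or.inl ⟨hv, hvx⟩
    · rw [sup_idem]
      exact Or.inr rfl
  · rintro v (⟨hv, hvx⟩ | rfl) l hl
    · induction l with
      | bot => exact Or.inr (by simp)
      | top => exact absurd rfl hl
      | coe r => exact Or.inl ⟨hadd v hv r hl, add_coe_mem_part hvx r⟩
    · exact Or.inr (by simp)

theorem isBComplete_inter_part {n : ℕ} {V : Set (Fin n → EReal)}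
    (hV : IsBComplete V) (x : Fin n → EReal) :
    IsBComplete ((V ∩ part x) ∪ {fun _ => (⊥ : EReal)}) := by
  refine ⟨isSubsemimodule_inter_part hV.1 x, ?_⟩
  rintro S hS ⟨v, hv, hSv⟩
  have hsub : (V ∩ part x) ∪ {fun _ => (⊥ : EReal)} ⊆ V :=
    Set.union_subset Set.inter_subset_left (Set.singleton_subset_iff.2 hV.1.1)
  rcases hv with ⟨hv, hvx⟩ | rfl
  · by_cases h : ∃ s ∈ S, s ∈ part x
    · obtain ⟨s, hs, hsx⟩ := h
      exact Or.inl ⟨hV.2 S (hS.trans hsub) ⟨v, hv, hSv⟩,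
        mem_part_of_le_of_le hsx hvx (le_sSup hs) (sSup_le hSv)⟩
    · -- No element of `S` lies in the part, so `S` consists at most of the bottom vector.
      refine Or.inr (le_antisymm (sSup_le fun s hs => ?_) fun _ => bot_le)
      rcases hS hs with hs' | hs'
      · exact absurd ⟨s, hs, hs'.2⟩ h
      · exact le_of_eq hs'
  · exact Or.inr (le_antisymm (sSup_le hSv) fun _ => bot_le)

theorem semimodule_restricted_to_part (n : ℕ) (V : Set (Fin n → EReal))
    (hV : IsSubsemimodule V) (hVfin : ∀ v ∈ V, ∀ i, v i ≠ ⊤)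
    (x : Fin n → EReal) (hx : ∀ i, x i ≠ ⊤) :
    IsSubsemimodule ((V ∩ part x) ∪ {fun _ => (⊥ : EReal)}) ∧
    (∀ W : Set (Fin n → EReal), IsSubsemimodule W → V ∩ part x ⊆ W →
      (V ∩ part x) ∪ {fun _ => (⊥ : EReal)} ⊆ W) ∧
    (IsBComplete V → IsBComplete ((V ∩ part x) ∪ {fun _ => (⊥ : EReal)})) ∧
    dSet x V = dSet x ((V ∩ part x) ∪ {fun _ => (⊥ : EReal)}) := by
  refine ⟨isSubsemimodule_inter_part hV x,
    fun W hW h => Set.union_subset h (Set.singleton_subset_iff.2 hW.1),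
    fun h => isBComplete_inter_part h x, le_antisymm ?_ ?_⟩
  · exact biInf_mono
      (Set.union_subset Set.inter_subset_left (Set.singleton_subset_iff.2 hV.1))
  · refine le_iInf₂ fun v hv => ?_
    by_cases hvx : v ∈ part x
    · exact iInf₂_le v (Or.inl ⟨hv, hvx⟩)
    · rw [dH_eq_top_of_notMem_part hvx]
      exact le_top
end

section
/- Let V ⊆ (Fin n → EReal) be a complete subsemimodule, let x : Fin n → EReal with x ∉ V, and set z := P_V(x) = sSup {v ∈ V | v ≤ x}. Define K := {h : Fin n → EReal | h\x ≤ h\z}. Then V ⊆ K, x ∉ K, and P_K(x) := sSup {h ∈ K | h ≤ x} equals z, i.e., P_V(x) = P_K(x). -/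
/-- A complete subsemimodule of `Fin n → EReal`: closed under arbitrary
(pointwise) suprema and under addition of arbitrary scalars. -/
def IsCompleteSubsemimodule {n : ℕ} (V : Set (Fin n → EReal)) : Prop :=
  (∀ S ⊆ V, sSup S ∈ V) ∧ (∀ v ∈ V, ∀ l : EReal, (fun i => v i + l) ∈ V)

theorem zero_le_vres_of_le {n : ℕ} {x y : Fin n → EReal} (h : x ≤ y) : 0 ≤ vres x y :=
  le_sSup fun i => by simpa using h i

/-- The supremum defining `x\y` need not be known to be attained: scalars `l` arbitrarily close
to `0` from below with `x + l ≤ y` already force `x ≤ y`. -/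
theorem le_of_zero_le_vres {n : ℕ} {x y : Fin n → EReal} (h : 0 ≤ vres x y) : x ≤ y := by
  intro i
  have key : ∀ r : EReal, r < 0 → ∃ l, r < l ∧ x i + l ≤ y i := by
    intro r hr
    obtain ⟨l, hl, hrl⟩ := lt_sSup_iff.1 (hr.trans_le h)
    exact ⟨l, hrl, hl i⟩
  by_contra! hlt
  generalize x i = a at key hlt
  induction a with
  | bot => exact not_lt_bot hlt
  | top =>
    obtain ⟨l, hl, hle⟩ := key ⊥ EReal.bot_lt_zero
    rw [EReal.top_add_of_ne_bot hl.ne'] at hle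
    exact absurd hlt hle.not_gt
  | coe a =>
    obtain ⟨r, hyr, hra⟩ := EReal.lt_iff_exists_real_btwn.1 hlt
    have hra' : r < a := EReal.coe_lt_coe_iff.1 hra
    obtain ⟨l, hl, hle⟩ := key ((r - a : ℝ) : EReal) (by
      exact_mod_cast sub_neg.2 hra')
    have h1 : (r : EReal) = (a : EReal) + ((r - a : ℝ) : EReal) := by
      rw [← EReal.coe_add]; congr 1; ring
    have h2 : (r : EReal) ≤ y i := by
      rw [h1]; exact (add_le_add_right hl.le _).trans hle
    exact absurd hyr h2.not_gt

theorem universal_separating_halfspace (n : ℕ) (V : Set (Fin n → EReal))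
    (hV : IsCompleteSubsemimodule V) (x : Fin n → EReal) (hx : x ∉ V) :
    V ⊆ {h : Fin n → EReal | vres h x ≤ vres h (sSup {v ∈ V | v ≤ x})} ∧
    x ∉ {h : Fin n → EReal | vres h x ≤ vres h (sSup {v ∈ V | v ≤ x})} ∧
    sSup {h ∈ {h : Fin n → EReal | vres h x ≤ vres h (sSup {v ∈ V | v ≤ x})} | h ≤ x} =
      sSup {v ∈ V | v ≤ x} := by
  have hzV : sSup {v ∈ V | v ≤ x} ∈ V := hV.1 _ fun v hv => hv.1
  have hzx : sSup {v ∈ V | v ≤ x} ≤ x := sSup_le fun v hv => hv.2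
  have hmax : ∀ v ∈ V, v ≤ x → v ≤ sSup {v ∈ V | v ≤ x} := fun v hv hvx => le_sSup ⟨hv, hvx⟩
  generalize sSup {v ∈ V | v ≤ x} = z at hzV hzx hmax ⊢
  have hVK : V ⊆ {h : Fin n → EReal | vres h x ≤ vres h z} := fun v hv =>
    sSup_le_sSup fun l hl => hmax _ (hV.2 v hv l) hl
  have hK : ∀ h : Fin n → EReal, vres h x ≤ vres h z → h ≤ x → h ≤ z := fun h hh hhx =>
    le_of_zero_le_vres ((zero_le_vres_of_le hhx).trans hh)
  refine ⟨hVK, fun hxK => hx ?_, le_antisymm (sSup_le fun h hh => hK h hh.1 hh.2)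
    (le_sSup ⟨hVK hzV, hzx⟩)⟩
  rwa [le_antisymm (hK x hxK le_rfl) hzx]
end

section
/- Let V ⊆ (Fin n → EReal) be a complete subsemimodule, let x : Fin n → EReal with x ∉ V, and set z := P_V(x) = sSup {v ∈ V | v ≤ x} and K := {h : Fin n → EReal | h\x ≤ h\z}. Then d(x, V) = d(x, K), i.e., ⨅ v ∈ V, d(x, v) = ⨅ h ∈ K, d(x, h). -/
theorem EReal_add_sSup_le {a b : EReal} {L : Set EReal} (h : ∀ l ∈ L, a + l ≤ b) :
    a + sSup L ≤ b := by
  induction a with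
  | bot => simp
  | top =>
    by_cases hL : sSup L = ⊥
    · simp [hL]
    · obtain ⟨l, hl, hl'⟩ := lt_sSup_iff.1 (bot_lt_iff_ne_bot.2 hL)
      have := h l hl
      rw [EReal.top_add_of_ne_bot hl'.ne', top_le_iff] at this
      simp [this]
  | coe a =>
    rw [add_comm, ← EReal.le_sub_iff_add_le (by simp) (by simp)]
    refine sSup_le fun l hl => ?_
    rw [EReal.le_sub_iff_add_le (by simp) (by simp), add_comm]
    exact h l hl

theorem le_vres {n : ℕ} {x y : Fin n → EReal} {l : EReal} (h : ∀ i, x i + l ≤ y i) :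
    l ≤ vres x y :=
  le_sSup h

theorem vres_add_vres_le {n : ℕ} (x y w : Fin n → EReal) :
    vres x y + vres y w ≤ vres x w :=
  le_vres fun i => by
    rw [← add_assoc]
    exact (add_le_add_left (add_vres_le x y i) _).trans (add_vres_le y w i)

theorem dist_to_subsemimodule_eq_dist_to_halfspace (n : ℕ) (V : Set (Fin n → EReal))
    (hV : IsCompleteSubsemimodule V) (x : Fin n → EReal) (hx : x ∉ V) :
    dSet x V =
      dSet x {h : Fin n → EReal | vres h x ≤ vres h (sSup {v ∈ V | v ≤ x})} := by
  have hzV : sSup {v ∈ V | v ≤ x} ∈ V := hV.1 _ fun v hv => hv.1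
  have hzx : sSup {v ∈ V | v ≤ x} ≤ x := sSup_le fun v hv => hv.2
  have hz0 : 0 ≤ vres (sSup {v ∈ V | v ≤ x}) x := le_vres fun i => by simpa using hzx i
  apply le_antisymm
  · refine le_iInf₂ fun h hh => (iInf₂_le _ hzV).trans ?_
    refine EReal.neg_le_neg_iff.2 ?_
    calc vres x h + vres h x
        ≤ vres x h + vres h (sSup {v ∈ V | v ≤ x}) := by gcongr; exact hh
      _ ≤ vres x (sSup {v ∈ V | v ≤ x}) := vres_add_vres_le _ _ _
      _ ≤ _ := le_add_of_nonneg_right hz0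
  · refine biInf_mono fun v hv => le_vres ?_
    have hle : (fun i => v i + vres v x) ≤ sSup {v ∈ V | v ≤ x} :=
      le_sSup ⟨hV.2 v hv _, add_vres_le v x⟩
    exact hle
end

section
/- Let V ⊆ (Fin n → EReal) be a complete subsemimodule and let x : Fin n → EReal with x ∉ V. Then P_V(x) is the unique element y of V such that v\x = v\y for all v ∈ V; that is, for y : Fin n → EReal, one has (y ∈ V ∧ ∀ v ∈ V, v\x = v\y) if and only if y = P_V(x). -/
/-- Although `0 ≤ v\y` only concerns a supremum of scalars, it already forces `v ≤ y`: every
negative real `c` satisfies `v + c ≤ y`, and letting `c` tend to `0` gives the claim. -/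
theorem zero_le_vres_iff {n : ℕ} (v y : Fin n → EReal) : 0 ≤ vres v y ↔ v ≤ y := by
  constructor
  · intro h i
    have key : ∀ c : ℝ, c < 0 → v i + (c : EReal) ≤ y i := by
      intro c hc
      have hc' : (c : EReal) < vres v y := lt_of_lt_of_le (by exact_mod_cast hc) h
      obtain ⟨l, hl, hcl⟩ := lt_sSup_iff.1 hc'
      exact (add_le_add le_rfl hcl.le).trans (hl i)
    generalize v i = a at key ⊢
    generalize y i = b at key ⊢
    induction a with
    | bot => exact bot_le
    | top =>
      have h1 := key (-1) (by norm_num)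
      rwa [EReal.top_add_coe] at h1
    | coe a =>
      induction b with
      | top => exact le_top
      | bot =>
        have h1 := key (-1) (by norm_num)
        rw [← EReal.coe_add, le_bot_iff] at h1
        exact absurd h1 (EReal.coe_ne_bot _)
      | coe b =>
        rw [EReal.coe_le_coe_iff]
        by_contra! hab
        have h1 := key ((b - a) / 2) (by linarith)
        rw [← EReal.coe_add, EReal.coe_le_coe_iff] at h1
        linarith
  · intro h
    exact le_sSup fun i => by simpa using h i

theorem projection_unique_orthogonality (n : ℕ) (V : Set (Fin n → EReal))
    (hV : IsCompleteSubsemimodule V) (x : Fin n → EReal) (hx : x ∉ V)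
    (y : Fin n → EReal) :
    (y ∈ V ∧ ∀ v ∈ V, vres v x = vres v y) ↔ y = sSup {v ∈ V | v ≤ x} := by
  have hPV : sSup {v ∈ V | v ≤ x} ∈ V := hV.1 _ fun v hv => hv.1
  have hPx : sSup {v ∈ V | v ≤ x} ≤ x := sSup_le fun v hv => hv.2
  have hP : ∀ v ∈ V, vres v x = vres v (sSup {v ∈ V | v ≤ x}) := by
    intro v hv
    refine congrArg sSup (Set.ext fun l => ⟨fun hl => ?_, fun hl i => (hl i).trans (hPx i)⟩)
    have hle : (fun i => v i + l) ≤ sSup {v ∈ V | v ≤ x} := le_sSup ⟨hV.2 v hv l, hl⟩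
    exact hle
  constructor
  · rintro ⟨hy, h⟩
    apply le_antisymm
    · refine le_sSup ⟨hy, (zero_le_vres_iff y x).1 ?_⟩
      rw [h y hy]
      exact (zero_le_vres_iff y y).2 le_rfl
    · rw [← zero_le_vres_iff, ← h _ hPV]
      exact (zero_le_vres_iff _ _).2 hPx
  · rintro rfl
    exact ⟨hPV, hP⟩
end

section
/- Let a, b : Fin n → EReal be row vectors with no +∞ entries such that Supp a ∩ Supp b = ∅ and Supp b ≠ ∅, and let H := {h : Fin n → EReal | (∀ i, h i ≠ +∞) ∧ a·h ≥ b·h}. For any x : Fin n → EReal with no +∞ entry, define u := x ⊓ (b\(a·x)) pointwise, i.e., u j = min(x j, sSup {t ∈ EReal | b j + t ≤ a·x}). Then u ∈ H, u ≤ x, and every h ∈ H with h ≤ x satisfies h ≤ u; hence P_H(x) := sSup {h ∈ H | h ≤ x} equals u. -/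
/-!
Write `r j = b j \ (a·x)`. For `h ≤ x` in the half-space, `b j + h j ≤ b·h ≤ a·h ≤ a·x`, so
`h j ≤ r j` and hence `h ≤ x ⊓ r = u`. Conversely `b j + r j ≤ a·x` because the supremum defining
`r j` satisfies the inequality itself (`add_sSup_le`), so `b·u ≤ a·x`; and `a·u = a·x`, since where
`a i ≠ ⊥` disjointness of the supports forces `b i = ⊥`, whence `r i = ⊤` and `u i = x i`. So `u` is
the greatest element of the half-space below `x`.
-/

/-- Max-plus pairing of a row vector with a column vector: `a·h = ⨆ i, a i + h i`. -/
noncomputable def dotE {n : ℕ} (a h : Fin n → EReal) : EReal := ⨆ i, (a i + h i)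

/-- Support of a row vector: indices with entry `≠ -∞`. -/
def rSupp {n : ℕ} (a : Fin n → EReal) : Set (Fin n) := {i | a i ≠ ⊥}

/-- Residuation in `EReal`: the supremum defining `c \ l` is itself a solution of `c + t ≤ l`. -/
theorem add_sSup_le_s14 {c : EReal} (hc : c ≠ ⊤) (l : EReal) :
    c + sSup {t : EReal | c + t ≤ l} ≤ l := by
  rcases eq_or_ne c ⊥ with rfl | hc'
  · simp
  · rw [add_comm]
    refine EReal.add_le_of_le_sub (sSup_le fun t ht => ?_)
    rw [EReal.le_sub_iff_add_le (Or.inl hc') (Or.inl hc), add_comm]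
    exact ht

theorem dotE_mono {n : ℕ} (a : Fin n → EReal) {h k : Fin n → EReal} (hk : h ≤ k) :
    dotE a h ≤ dotE a k :=
  iSup_mono fun i => add_le_add le_rfl (hk i)

theorem projection_onto_halfspace (n : ℕ) (a b : Fin n → EReal)
    (ha : ∀ i, a i ≠ ⊤) (hb : ∀ i, b i ≠ ⊤)
    (hdisj : rSupp a ∩ rSupp b = ∅) (hbne : rSupp b ≠ ∅)
    (x : Fin n → EReal) (hx : ∀ i, x i ≠ ⊤) :
    let H : Set (Fin n → EReal) :=
      {h | (∀ i, h i ≠ ⊤) ∧ dotE b h ≤ dotE a h}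
    let u : Fin n → EReal := fun j => min (x j) (sSup {t : EReal | b j + t ≤ dotE a x})
    u ∈ H ∧ u ≤ x ∧ (∀ h ∈ H, h ≤ x → h ≤ u) ∧ sSup {h ∈ H | h ≤ x} = u := by
  intro H u
  have hux : u ≤ x := fun j => min_le_left _ _
  have hbu : dotE b u ≤ dotE a x := iSup_le fun j =>
    (add_le_add le_rfl (min_le_right _ _)).trans (add_sSup_le_s14 (hb j) _)
  have hau : dotE a x ≤ dotE a u := by
    refine iSup_le fun i => ?_
    by_cases hai : a i = ⊥
    · simp [hai]
    · have hbi : b i = ⊥ := by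
        by_contra hbi
        exact Set.eq_empty_iff_forall_notMem.mp hdisj i ⟨hai, hbi⟩
      have hui : u i = x i := by simp [u, hbi]
      rw [← hui]
      exact le_iSup (fun i => a i + u i) i
  have huH : u ∈ H :=
    ⟨fun i => ((hux i).trans_lt (lt_top_iff_ne_top.mpr (hx i))).ne, hbu.trans hau⟩
  have hmax : ∀ h ∈ H, h ≤ x → h ≤ u := fun h hh hhx j =>
    le_min (hhx j) <| le_sSup <|
      (le_iSup (fun i => b i + h i) j).trans (hh.2.trans (dotE_mono a hhx))
  exact ⟨huH, hux, hmax, IsGreatest.csSup_eq ⟨⟨huH, hux⟩, fun h hh => hmax h hh.1 hh.2⟩⟩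
end

section
/- Let a, b : Fin n → EReal be row vectors with no +∞ entries such that Supp a ∩ Supp b = ∅ and Supp b ≠ ∅, let H := {h : Fin n → EReal | (∀ i, h i ≠ +∞) ∧ a·h ≥ b·h}, and let x : Fin n → EReal have no +∞ entry and satisfy x ∉ H. Then d(x, H) = (a·x)\(b·x); explicitly, d(x, H) = −(a·x) + (b·x) if a·x ≠ −∞, and d(x, H) = +∞ if a·x = −∞. -/
/-- Scalar residuation `μ\ν`. -/
noncomputable def sres (μ ν : EReal) : EReal := sSup {l : EReal | μ + l ≤ ν}

lemma le_dotE {n : ℕ} (a h : Fin n → EReal) (i : Fin n) : a i + h i ≤ dotE a h :=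
  le_iSup (fun i => a i + h i) i

lemma exists_dotE_eq {n : ℕ} [Nonempty (Fin n)] (a h : Fin n → EReal) :
    ∃ i, dotE a h = a i + h i := by
  obtain ⟨i, hi⟩ := exists_eq_ciSup_of_finite (f := fun i => a i + h i)
  exact ⟨i, hi.symm⟩

lemma add_le_of_mem_halfspace {n : ℕ} [Nonempty (Fin n)] {a b x h : Fin n → EReal} {β : ℝ}
    (hβ : dotE b x = β) (hH : dotE b h ≤ dotE a h) {l m : EReal}
    (hl : ∀ i, x i + l ≤ h i) (hm : ∀ i, h i + m ≤ x i) :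
    l + m ≤ dotE a x - β := by
  obtain ⟨i, hi⟩ := exists_dotE_eq b x
  obtain ⟨j, hj⟩ := exists_dotE_eq a h
  have h1 : (β : EReal) + l ≤ dotE a h := by
    rw [← hβ, hi, add_assoc]
    exact (add_le_add_right (hl i) _).trans ((le_dotE b h i).trans hH)
  have h2 : dotE a h + m ≤ dotE a x := by
    rw [hj, add_assoc]
    exact (add_le_add_right (hm j) _).trans (le_dotE a x j)
  have h3 : (l + m) + β ≤ dotE a x := by
    rw [add_comm (l + m), ← add_assoc]
    exact (add_le_add_left h1 m).trans h2
  exact (EReal.le_sub_iff_add_le (.inl (EReal.coe_ne_bot _)) (.inl (EReal.coe_ne_top _))).2 h3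

/-- The witness is the largest `h ≤ x` with `b·h ≤ a·x`; where `b i = ⊥` the bound `α - b i` is `⊤`,
so that `h i = x i`. -/
lemma exists_mem_halfspace {n : ℕ} [Nonempty (Fin n)] {a b x : Fin n → EReal}
    (hb : ∀ i, b i ≠ ⊤) (hdisj : rSupp a ∩ rSupp b = ∅) (hx : ∀ i, x i ≠ ⊤) {α β : ℝ}
    (hα : dotE a x = α) (hβ : dotE b x = β) (hαβ : α < β) :
    ∃ h : Fin n → EReal, ((∀ i, h i ≠ ⊤) ∧ dotE b h ≤ dotE a h) ∧ dH x h ≤ β - α := by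
  refine ⟨fun i => min (x i) (α - b i), ⟨fun i => ?_, ?_⟩, ?_⟩
  · exact ne_top_of_le_ne_top (hx i) (min_le_left _ _)
  · have h1 : dotE b (fun i => min (x i) (α - b i)) ≤ α := by
      refine iSup_le fun i => ?_
      refine (add_le_add_right (min_le_right _ _) _).trans ?_
      have := hb i
      induction hbi : b i with
      | bot => simp
      | top => contradiction
      | coe r =>
        norm_cast
        simp
    refine h1.trans ?_
    obtain ⟨j, hj⟩ := exists_dotE_eq a x
    have haj : a j ≠ ⊥ := by
      intro h
      rw [hα, h, EReal.bot_add] at hj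
      exact EReal.coe_ne_bot _ hj
    have hbj : b j = ⊥ := by
      by_contra h
      exact Set.eq_empty_iff_forall_notMem.1 hdisj j ⟨haj, h⟩
    have := le_dotE a (fun i => min (x i) (α - b i)) j
    simpa [hbj, ← hj, hα] using this
  · have h1 : (0 : EReal) ≤ vres (fun i => min (x i) (α - b i)) x :=
      le_sSup fun i => by simp
    have h2 : ((α - β : ℝ) : EReal) ≤ vres x (fun i => min (x i) (α - b i)) := by
      refine le_sSup fun i => le_min ?_ ?_
      · have h0 : ((α - β : ℝ) : EReal) ≤ 0 := by
          exact_mod_cast sub_nonpos.2 hαβ.le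
        simpa using add_le_add_right h0 (x i)
      · have hle := le_dotE b x i
        rw [hβ] at hle
        have := hb i
        have := hx i
        induction hbi : b i with
        | bot => simp
        | top => contradiction
        | coe r =>
          induction hxi : x i with
          | bot => simp
          | top => contradiction
          | coe s =>
            rw [hbi, hxi] at hle
            norm_cast at hle ⊢
            linarith
    have h3 := add_le_add h2 h1
    rw [add_zero] at h3
    refine (EReal.neg_le_neg_iff.2 h3).trans (le_of_eq ?_)
    norm_cast
    ring

lemma sres_coe (μ : EReal) (hμ : μ ≠ ⊤) (β : ℝ) : sres μ β = β - μ := by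
  induction μ with
  | top => contradiction
  | bot => simp [sres]
  | coe r =>
    have : {l : EReal | (r : EReal) + l ≤ β} = Set.Iic ((β : EReal) - r) := by
      ext l
      rw [Set.mem_Iic, EReal.le_sub_iff_add_le (.inl (EReal.coe_ne_bot _))
        (.inl (EReal.coe_ne_top _)), add_comm l]
      rfl
    rw [sres, this, csSup_Iic]

theorem dist_to_halfspace (n : ℕ) (a b : Fin n → EReal)
    (ha : ∀ i, a i ≠ ⊤) (hb : ∀ i, b i ≠ ⊤)
    (hdisj : rSupp a ∩ rSupp b = ∅) (hbne : rSupp b ≠ ∅)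
    (x : Fin n → EReal) (hx : ∀ i, x i ≠ ⊤)
    (hxH : x ∉ {h : Fin n → EReal | (∀ i, h i ≠ ⊤) ∧ dotE b h ≤ dotE a h}) :
    dSet x {h : Fin n → EReal | (∀ i, h i ≠ ⊤) ∧ dotE b h ≤ dotE a h} =
      sres (dotE a x) (dotE b x) ∧
    (dotE a x ≠ ⊥ →
      dSet x {h : Fin n → EReal | (∀ i, h i ≠ ⊤) ∧ dotE b h ≤ dotE a h} =
        -(dotE a x) + dotE b x) ∧
    (dotE a x = ⊥ →
      dSet x {h : Fin n → EReal | (∀ i, h i ≠ ⊤) ∧ dotE b h ≤ dotE a h} = ⊤) := by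
  have hlt : dotE a x < dotE b x := not_le.1 fun h => hxH ⟨hx, h⟩
  obtain ⟨i₀, -⟩ := Set.nonempty_iff_ne_empty.2 hbne
  have : Nonempty (Fin n) := ⟨i₀⟩
  have hβtop : dotE b x ≠ ⊤ := by
    obtain ⟨i, hi⟩ := exists_dotE_eq b x
    rw [hi]
    exact EReal.add_ne_top (hb i) (hx i)
  obtain ⟨β, hβ⟩ : ∃ β : ℝ, dotE b x = β :=
    ⟨_, (EReal.coe_toReal hβtop (ne_bot_of_gt hlt)).symm⟩
  have key : dSet x {h : Fin n → EReal | (∀ i, h i ≠ ⊤) ∧ dotE b h ≤ dotE a h} =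
      β - dotE a x := by
    apply le_antisymm
    · induction hα : dotE a x with
      | bot => simp
      | top => exact absurd hα hlt.ne_top
      | coe α =>
        rw [hα, hβ] at hlt
        obtain ⟨h, hh, hd⟩ := exists_mem_halfspace hb hdisj hx hα hβ (EReal.coe_lt_coe_iff.1 hlt)
        exact (iInf₂_le h hh).trans hd
    · refine le_iInf₂ fun h hh => ?_
      have hsum : vres x h + vres h x ≤ dotE a x - β := by
        refine EReal.add_le_of_forall_lt fun l' hl' m' hm' => ?_
        obtain ⟨l, hl, hll⟩ := lt_sSup_iff.1 hl'
        obtain ⟨m, hm, hmm⟩ := lt_sSup_iff.1 hm'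
        exact (add_le_add hll.le hmm.le).trans (add_le_of_mem_halfspace hβ hh.2 hl hm)
      refine le_trans (le_of_eq ?_) (EReal.neg_le_neg_iff.2 hsum)
      rw [EReal.neg_sub (.inr (EReal.coe_ne_bot _)) (.inr (EReal.coe_ne_top _)), add_comm,
        sub_eq_add_neg]
  rw [key, hβ, sres_coe _ hlt.ne_top]
  refine ⟨rfl, fun _ => ?_, fun h => ?_⟩
  · rw [sub_eq_add_neg, add_comm]
  · simp [h]
end

section
/- Let a, b : Fin n → EReal be row vectors with no +∞ entries, neither identically −∞, such that there exists i with a i < b i and there exists i with a i ≥ b i. Define truncations a', b' : Fin n → EReal by a' i = a i if a i ≥ b i and a' i = −∞ otherwise, and b' j = b j if a j < b j and b' j = −∞ otherwise. Then Supp a' ∩ Supp b' = ∅, and {h : Fin n → EReal | (∀ i, h i ≠ +∞) ∧ a·h ≥ b·h} = {h : Fin n → EReal | (∀ i, h i ≠ +∞) ∧ a'·h ≥ b'·h}. -/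
theorem canonical_form_of_halfspace (n : ℕ) (a b : Fin n → EReal)
    (ha : ∀ i, a i ≠ ⊤) (hb : ∀ i, b i ≠ ⊤)
    (hane : a ≠ fun _ => (⊥ : EReal)) (hbne : b ≠ fun _ => (⊥ : EReal))
    (hlt : ∃ i, a i < b i) (hge : ∃ i, b i ≤ a i) :
    let a' : Fin n → EReal := fun i => if b i ≤ a i then a i else ⊥
    let b' : Fin n → EReal := fun j => if a j < b j then b j else ⊥
    rSupp a' ∩ rSupp b' = ∅ ∧
    {h : Fin n → EReal | (∀ i, h i ≠ ⊤) ∧ dotE b h ≤ dotE a h} =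
      {h : Fin n → EReal | (∀ i, h i ≠ ⊤) ∧ dotE b' h ≤ dotE a' h} := by
  intro a' b'
  have ha'le : ∀ i, a' i ≤ a i := by
    intro i; by_cases hi : b i ≤ a i <;> simp [a', hi]
  have hb'le : ∀ i, b' i ≤ b i := by
    intro i; by_cases hi : a i < b i <;> simp [b', hi]
  refine ⟨?_, ?_⟩
  · ext i
    by_cases hi : b i ≤ a i
    · simp [rSupp, b', not_lt.mpr hi]
    · simp [rSupp, a', hi]
  ext h
  simp only [Set.mem_ofPred_eq]
  refine and_congr_right fun hh => ⟨fun H => ?_, fun H => ?_⟩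
  · by_contra! hcon
    have hne : Nonempty (Fin n) := ⟨hlt.choose⟩
    obtain ⟨i, hi⟩ := exists_eq_ciSup_of_finite (f := fun i => a i + h i)
    have hbot : (⊥ : EReal) < dotE b' h := bot_le.trans_lt hcon
    have hterm : a i + h i < dotE b' h := by
      by_cases hab : b i ≤ a i
      · refine lt_of_le_of_lt ?_ hcon
        have : a i + h i = a' i + h i := by simp [a', hab]
        rw [this]
        exact le_iSup (fun i => a' i + h i) i
      · by_cases hib : h i = ⊥
        · rwa [hib, EReal.add_bot]
        · have h1 : a i + h i < b i + h i :=
            EReal.add_lt_add_of_lt_of_le (not_le.mp hab) le_rfl hib (hh i)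
          have h2 : b i + h i = b' i + h i := by simp [b', not_le.mp hab]
          rw [h2] at h1
          exact h1.trans_le (le_iSup (fun i => b' i + h i) i)
    have hb'b : dotE b' h ≤ dotE b h := iSup_mono fun i => add_le_add_left (hb'le i) _
    have hia : a i + h i = dotE a h := hi
    rw [hia] at hterm
    exact absurd (hb'b.trans H) (not_le.mpr hterm)
  · have ha'a : dotE a' h ≤ dotE a h := iSup_mono fun i => add_le_add_left (ha'le i) _
    refine iSup_le fun i => ?_
    by_cases hab : b i ≤ a i
    · exact (add_le_add_left hab _).trans (le_iSup (fun i => a i + h i) i)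
    · have h2 : b i + h i = b' i + h i := by simp [b', not_le.mp hab]
      rw [h2]
      exact (le_iSup (fun i => b' i + h i) i).trans (H.trans ha'a)
end
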